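/- (Weighted Sobolev embedding into weighted C⁰; equation (3.1).) Let n ≥ 1, p > n and δ ∈ ℝ. There is a constant C > 0 such that every C¹ function w : ℝⁿ → ℝ with ‖w‖_{W^{1,p}_δ} < ∞ satisfies |w(x)| ≤ C ⟨x⟩^{δ} ‖w‖_{W^{1,p}_δ} for all x ∈ ℝⁿ. -/

import Mathlib

/-!
The estimate is Morrey's inequality on the ball of radius `R = ⟨x⟩ / 2` about `x`, where all the
weights `⟨y⟩ ^ a` are comparable to `⟨x⟩ ^ a` (`jap_rpow_le`), because `⟨·⟩` is `1`-Lipschitz.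

For `z` in the unit ball, integrating `Dw` along the segment from `x` to `x + R z` gives
`|w x| ≤ |w (x + R z)| + R ∫₀¹ ‖Dw (x + t R z)‖ dt` (`enorm_le_add_lintegral_segment`). This is
integrated over `z`. By Hölder's inequality and the change of variables `y = x + s z`, the integral
of `‖f (x + s z)‖` over the unit ball is at most a constant times `s ^ (-n/p)` times the `L^p` norm
of `f`; inserting the weight costs a factor comparable to `⟨x⟩ ^ (-a)`
(`lintegral_ball_dilate_weighted_le`). This is applied to `f = w` with `s = R`, and to `f = Dw` with
`s = t R`. In the second case the factor `t ^ (-n/p)` is integrable on `(0, 1]` exactly because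
`n < p`. The powers of `⟨x⟩` combine to `⟨x⟩ ^ δ` in both terms.
-/

noncomputable section

open MeasureTheory Filter
open scoped ENNReal Topology

/-- `n`-dimensional Euclidean space. -/
abbrev Euc (n : ℕ) := EuclideanSpace ℝ (Fin n)

/-- The Japanese bracket `⟨x⟩ = (1 + ‖x‖²)^(1/2)`. -/
def jap {n : ℕ} (x : Euc n) : ℝ := Real.sqrt (1 + ‖x‖ ^ 2)

/-- Partial derivative `∂ᵢ f` of a real-valued function. -/
def pd {n : ℕ} (i : Fin n) (f : Euc n → ℝ) (x : Euc n) : ℝ :=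
  fderiv ℝ f x (EuclideanSpace.single i 1)

/-- The Euclidean Laplacian `Δf = Σᵢ ∂ᵢ²f`. -/
def lap {n : ℕ} (f : Euc n → ℝ) (x : Euc n) : ℝ :=
  ∑ i, pd i (pd i f) x

/-- Divergence of a vector field. -/
def divg {n : ℕ} (W : Euc n → Euc n) (x : Euc n) : ℝ :=
  ∑ i, pd i (fun y => W y i) x

/-- The conformal Killing operator `(𝒟W)ᵢⱼ = ∂ᵢWⱼ + ∂ⱼWᵢ − (2/n)(div W)δᵢⱼ`. -/
def confKill {n : ℕ} (W : Euc n → Euc n) (x : Euc n) : Matrix (Fin n) (Fin n) ℝ :=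
  Matrix.of fun i j =>
    pd i (fun y => W y j) x + pd j (fun y => W y i) x
      - (2 / (n : ℝ)) * divg W x * (if i = j then 1 else 0)

/-- The Frobenius norm of a matrix. -/
def frob {n : ℕ} (M : Matrix (Fin n) (Fin n) ℝ) : ℝ :=
  Real.sqrt (∑ i, ∑ j, (M i j) ^ 2)

/-- The vector Laplacian `(Δ_L W)ⱼ = −Σᵢ ∂ᵢ (𝒟W)ᵢⱼ`. -/
def vecLap {n : ℕ} (W : Euc n → Euc n) (x : Euc n) : Euc n :=
  (EuclideanSpace.equiv (Fin n) ℝ).symm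
    (fun j => -∑ i, pd i (fun y => confKill W y i j) x)

/-- Weighted `L^p_δ` norm (as an extended nonnegative real). -/
def LpW {n : ℕ} {F : Type*} [NormedAddCommGroup F] (p δ : ℝ) (f : Euc n → F) : ℝ≥0∞ :=
  (∫⁻ x, ENNReal.ofReal ((jap x ^ (-δ - (n : ℝ) / p) * ‖f x‖) ^ p)) ^ (1 / p)

/-- Weighted Sobolev `W^{k,p}_δ` norm. -/
def SobW {n : ℕ} {F : Type*} [NormedAddCommGroup F] [NormedSpace ℝ F]
    (k : ℕ) (p δ : ℝ) (f : Euc n → F) : ℝ≥0∞ :=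
  ∑ j ∈ Finset.range (k + 1),
    (∫⁻ x, ENNReal.ofReal
      ((jap x ^ (-δ - (n : ℝ) / p + (j : ℝ)) * ‖iteratedFDeriv ℝ j f x‖) ^ p)) ^ (1 / p)

/-- Weighted `L^∞_δ` norm. -/
def LinfW {n : ℕ} {F : Type*} [NormedAddCommGroup F] (δ : ℝ) (f : Euc n → F) : ℝ≥0∞ :=
  ⨆ x, ENNReal.ofReal (jap x ^ (-δ) * ‖f x‖)

/-- Weighted `L^∞_δ` norm of a matrix field, pointwise Frobenius norm. -/
def LinfWM {n : ℕ} (δ : ℝ) (σ : Euc n → Matrix (Fin n) (Fin n) ℝ) : ℝ≥0∞ :=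
  ⨆ x, ENNReal.ofReal (jap x ^ (-δ) * frob (σ x))

/-- `N = 2n/(n−2)`. -/
def Nc (n : ℕ) : ℝ := 2 * n / ((n : ℝ) - 2)
/-- `c_n = (n−2)/(4(n−1))`. -/
def cc (n : ℕ) : ℝ := ((n : ℝ) - 2) / (4 * ((n : ℝ) - 1))
/-- `b_n = (n−2)/(4n)`. -/
def bc (n : ℕ) : ℝ := ((n : ℝ) - 2) / (4 * (n : ℝ))

/-- Componentwise smoothness of a matrix field. -/
def SmoothMat {n : ℕ} (σ : Euc n → Matrix (Fin n) (Fin n) ℝ) : Prop :=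
  ∀ i j, ContDiff ℝ (⊤ : ℕ∞) fun x => σ x i j

/-- A matrix field is symmetric, trace-free and divergence-free. -/
def SymTT {n : ℕ} (σ : Euc n → Matrix (Fin n) (Fin n) ℝ) : Prop :=
  (∀ x i j, σ x i j = σ x j i) ∧ (∀ x, ∑ i, σ x i i = 0) ∧
    (∀ x j, ∑ i, pd i (fun y => σ y i j) x = 0)

/-- The left-hand side of the Lichnerowicz (Hamiltonian) equation (i). -/
def HamExpr {n : ℕ} (τ : Euc n → ℝ) (σ : Euc n → Matrix (Fin n) (Fin n) ℝ)
    (ρ : Euc n → ℝ) (u : Euc n → ℝ) (W : Euc n → Euc n) (x : Euc n) : ℝ :=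
  lap u x + cc n * frob (σ x + confKill W x) ^ 2 * u x ^ (-(Nc n) - 1)
    - bc n * τ x ^ 2 * u x ^ (Nc n - 1) + cc n * ρ x * u x ^ (-(Nc n) / 2)

/-- Equation (i): the Lichnerowicz equation. -/
def HamEq {n : ℕ} (τ : Euc n → ℝ) (σ : Euc n → Matrix (Fin n) (Fin n) ℝ)
    (ρ : Euc n → ℝ) (u : Euc n → ℝ) (W : Euc n → Euc n) : Prop :=
  ∀ x, HamExpr τ σ ρ u W x = 0

/-- Equation (ii): the momentum constraint `Δ_L W + ((n−1)/n) u^N ∇τ + J = 0`. -/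
def MomEq {n : ℕ} (τ : Euc n → ℝ) (J : Euc n → Euc n)
    (u : Euc n → ℝ) (W : Euc n → Euc n) : Prop :=
  ∀ x, vecLap W x + ((((n : ℝ) - 1) / n) * u x ^ Nc n) • gradient τ x + J x = 0

/-- Global supersolution property for `φ₊`. -/
def GlobalSuperSol {n : ℕ} (p δ : ℝ) (τ : Euc n → ℝ)
    (σ : Euc n → Matrix (Fin n) (Fin n) ℝ) (ρ : Euc n → ℝ) (J : Euc n → Euc n)
    (φp : Euc n → ℝ) : Prop :=
  ∀ φ : Euc n → ℝ, Continuous φ → (∀ x, 0 < φ x ∧ φ x ≤ φp x) →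
    ∀ W : Euc n → Euc n, ContDiff ℝ (⊤ : ℕ∞) W → SobW 2 p δ W < ⊤ → MomEq τ J φ W →
    ∀ x, HamExpr τ σ ρ φp W x ≤ 0

/-- Global subsolution property for `φ₋`. -/
def GlobalSubSol {n : ℕ} (p δ : ℝ) (τ : Euc n → ℝ)
    (σ : Euc n → Matrix (Fin n) (Fin n) ℝ) (ρ : Euc n → ℝ) (J : Euc n → Euc n)
    (φm : Euc n → ℝ) : Prop :=
  ∀ φ : Euc n → ℝ, Continuous φ → (∀ x, φm x ≤ φ x) →
    ∀ W : Euc n → Euc n, ContDiff ℝ (⊤ : ℕ∞) W → SobW 2 p δ W < ⊤ → MomEq τ J φ W →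
    ∀ x, 0 ≤ HamExpr τ σ ρ φm W x

/-- Hölder's inequality on the unit ball combined with the dilation `z ↦ x + s z`. -/
lemma lintegral_ball_dilate_le {n : ℕ} {p : ℝ} (hp : 1 < p) {G : Euc n → ℝ≥0∞}
    (hG : Measurable G) (x : Euc n) {s : ℝ} (hs : 0 < s) :
    ∫⁻ z in Metric.ball (0 : Euc n) 1, G (x + s • z) ≤
      volume (Metric.ball (0 : Euc n) 1) ^ (1 - 1 / p) *
        (ENNReal.ofReal (s ^ (-((n : ℝ) / p))) * (∫⁻ y, G y ^ p) ^ (1 / p)) := by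
  have hp0 : 0 < p := by linarith
  have hpq : p.HolderConjugate (p / (p - 1)) := Real.HolderConjugate.conjExponent hp
  have hm : Measurable fun z : Euc n => G (x + s • z) := hG.comp (by fun_prop)
  have h := ENNReal.lintegral_mul_le_Lp_mul_Lq
    (volume.restrict (Metric.ball (0 : Euc n) 1)) hpq (f := fun z => G (x + s • z))
    (g := fun _ => 1) hm.aemeasurable aemeasurable_const
  have hq : 1 / (p / (p - 1)) = 1 - 1 / p := by field_simp
  simp only [Pi.mul_apply, mul_one, ENNReal.one_rpow, lintegral_const, one_mul,
    Measure.restrict_apply MeasurableSet.univ, Set.univ_inter, hq] at h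
  refine h.trans ?_
  rw [mul_comm]
  gcongr
  have hscale : ∫⁻ z, G (x + s • z) ^ p = ENNReal.ofReal (s ^ (-(n : ℝ))) * ∫⁻ y, G y ^ p := by
    have h1 : ∫⁻ z, G (x + s • z) ^ p
        = ∫⁻ y, G (x + y) ^ p ∂(Measure.map (fun z : Euc n => s • z) volume) := by
      have hm' : Measurable fun y : Euc n => G (x + y) ^ p :=
        (hG.comp (measurable_const_add x)).pow_const p
      rw [lintegral_map hm' (measurable_const_smul s)]
    rw [h1, Measure.map_addHaar_smul _ hs.ne', lintegral_smul_measure,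
      lintegral_add_left_eq_self (fun y => G y ^ p) x, smul_eq_mul]
    congr 2
    rw [abs_of_pos (by positivity), finrank_euclideanSpace_fin, Real.rpow_neg hs.le,
      Real.rpow_natCast]
  calc (∫⁻ z in Metric.ball (0 : Euc n) 1, G (x + s • z) ^ p) ^ (1 / p)
      ≤ (∫⁻ z, G (x + s • z) ^ p) ^ (1 / p) := by
        gcongr; exact Measure.restrict_le_self
    _ = _ := by
      rw [hscale, ENNReal.mul_rpow_of_nonneg _ _ (by positivity),
        ENNReal.ofReal_rpow_of_pos (by positivity), ← Real.rpow_mul hs.le]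
      congr 3
      ring

/-- The fundamental theorem of calculus along the segment from `x` to `x + R z`. -/
lemma enorm_le_add_lintegral_segment {n : ℕ} {w : Euc n → ℝ} (hw : ContDiff ℝ 1 w) (x : Euc n)
    {R : ℝ} (hR : 0 < R) {z : Euc n} (hz : ‖z‖ ≤ 1) :
    ‖w x‖ₑ ≤ ‖w (x + R • z)‖ₑ +
      ∫⁻ t in Set.Ioc (0 : ℝ) 1, ENNReal.ofReal R * ‖fderiv ℝ w (x + (t * R) • z)‖ₑ := by
  have hd : ∀ t : ℝ, HasDerivAt (fun t : ℝ => w (x + (t * R) • z))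
      (fderiv ℝ w (x + (t * R) • z) (R • z)) t := by
    intro t
    have h1 : HasDerivAt (fun t : ℝ => x + (t * R) • z) (R • z) t := by
      simpa using (((hasDerivAt_id t).mul_const R).smul_const z).const_add x
    exact ((hw.differentiable one_ne_zero).differentiableAt.hasFDerivAt).comp_hasDerivAt t h1
  have hc : Continuous fun t : ℝ => fderiv ℝ w (x + (t * R) • z) (R • z) :=
    ((hw.continuous_fderiv one_ne_zero).comp (by fun_prop)).clm_apply continuous_const
  have hI := intervalIntegral.integral_eq_sub_of_hasDerivAt (a := 0) (b := 1)
    (fun t _ => hd t) (hc.intervalIntegrable _ _)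
  simp only [one_mul, zero_mul, zero_smul, add_zero] at hI
  rw [intervalIntegral.integral_of_le zero_le_one] at hI
  have hx : w x = w (x + R • z)
      - ∫ t in Set.Ioc (0 : ℝ) 1, fderiv ℝ w (x + (t * R) • z) (R • z) := by
    rw [hI]; ring
  calc ‖w x‖ₑ ≤ ‖w (x + R • z)‖ₑ
        + ‖∫ t in Set.Ioc (0 : ℝ) 1, fderiv ℝ w (x + (t * R) • z) (R • z)‖ₑ := by
        conv_lhs => rw [hx]
        exact enorm_sub_le
    _ ≤ _ := by
        gcongr
        refine (enorm_integral_le_lintegral_enorm _).trans (lintegral_mono fun t => ?_)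
        rw [← ofReal_norm, ← ofReal_norm, ← ENNReal.ofReal_mul hR.le]
        apply ENNReal.ofReal_le_ofReal
        refine (ContinuousLinearMap.le_opNorm _ _).trans ?_
        rw [norm_smul, Real.norm_of_nonneg hR.le, mul_comm]
        gcongr
        exact mul_le_of_le_one_right hR.le hz

lemma jap_pos {n : ℕ} (x : Euc n) : 0 < jap x := by
  unfold jap; positivity

lemma continuous_jap {n : ℕ} : Continuous (jap : Euc n → ℝ) := by
  unfold jap; fun_prop

lemma jap_le_add {n : ℕ} (x y : Euc n) : jap x ≤ jap y + ‖x - y‖ := by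
  have h1 : ‖x‖ ≤ ‖y‖ + ‖x - y‖ := by
    simpa using norm_add_le y (x - y)
  have hy : ‖y‖ ≤ jap y := Real.le_sqrt_of_sq_le (by linarith)
  have hsq : jap y ^ 2 = 1 + ‖y‖ ^ 2 := Real.sq_sqrt (by positivity)
  refine Real.sqrt_le_iff.2 ⟨by have := jap_pos y; positivity, ?_⟩
  nlinarith [norm_nonneg x, norm_nonneg y, norm_nonneg (x - y)]

/-- On the ball of radius `⟨x⟩ / 2` about `x` the weights `⟨·⟩ ^ a` are comparable to
`⟨x⟩ ^ a`. -/
lemma jap_rpow_le {n : ℕ} (a : ℝ) {x y : Euc n} (h : ‖y - x‖ ≤ jap x / 2) :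
    1 ≤ (2 : ℝ) ^ |a| * jap x ^ (-a) * jap y ^ a := by
  have hx := jap_pos x
  have hy := jap_pos y
  have h1 := jap_le_add x y
  have h2 := jap_le_add y x
  rw [norm_sub_rev] at h1
  have e : (2 : ℝ) ^ |a| * jap x ^ (-a) * jap y ^ a = 2 ^ |a| * (jap y / jap x) ^ a := by
    rw [Real.div_rpow hy.le hx.le, Real.rpow_neg hx.le]; field_simp
  rw [e]
  have hr : 0 < jap y / jap x := by positivity
  rcases le_total 0 a with ha | ha
  · rw [abs_of_nonneg ha, ← Real.mul_rpow (by norm_num) hr.le]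
    apply Real.one_le_rpow _ ha
    rw [← mul_div_assoc, le_div_iff₀ hx]; linarith
  · rw [abs_of_nonpos ha, Real.rpow_neg (by norm_num), ← div_eq_inv_mul,
      ← Real.div_rpow hr.le (by norm_num)]
    apply Real.one_le_rpow_of_pos_of_le_one_of_nonpos (by positivity) _ ha
    rw [div_le_one (by norm_num), div_le_iff₀ hx]; linarith

/-- The weighted version of `lintegral_ball_dilate_le`: the integral of
`‖f (x + s z)‖` over the unit ball, for `s ≤ ⟨x⟩ / 2`, is controlled by the weighted `L^p` norm of `f`. -/
lemma lintegral_ball_dilate_weighted_le {n : ℕ} {F : Type*} [NormedAddCommGroup F] {p : ℝ}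
    (hp : 1 < p) (a : ℝ) {f : Euc n → F} (hf : Continuous f) (x : Euc n) {s : ℝ} (hs : 0 < s)
    (hsx : s ≤ jap x / 2) :
    ∫⁻ z in Metric.ball (0 : Euc n) 1, ‖f (x + s • z)‖ₑ ≤
      ENNReal.ofReal (2 ^ |a| * jap x ^ (-a)) *
      (volume (Metric.ball (0 : Euc n) 1) ^ (1 - 1 / p) *
        (ENNReal.ofReal (s ^ (-((n : ℝ) / p))) *
          (∫⁻ y, ENNReal.ofReal ((jap y ^ a * ‖f y‖) ^ p)) ^ (1 / p))) := by
  have hx := jap_pos x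
  have hcont : Continuous fun y => jap y ^ a * ‖f y‖ :=
    (continuous_jap.rpow_const fun y => Or.inl (jap_pos y).ne').mul hf.norm
  have hG : Measurable fun y => ENNReal.ofReal (jap y ^ a * ‖f y‖) :=
    hcont.measurable.ennreal_ofReal
  have key := lintegral_ball_dilate_le hp hG x hs
  have hpw : ∀ y, ENNReal.ofReal (jap y ^ a * ‖f y‖) ^ p
      = ENNReal.ofReal ((jap y ^ a * ‖f y‖) ^ p) := fun y =>
    ENNReal.ofReal_rpow_of_nonneg
      (mul_nonneg (Real.rpow_nonneg (jap_pos y).le _) (norm_nonneg _)) (by linarith)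
  simp only [hpw] at key
  refine le_trans ?_ (mul_le_mul_right key _)
  have hm : Measurable fun z : Euc n =>
      ENNReal.ofReal (jap (x + s • z) ^ a * ‖f (x + s • z)‖) :=
    hG.comp (g := fun y => ENNReal.ofReal (jap y ^ a * ‖f y‖)) (f := fun z => x + s • z)
      (by fun_prop)
  rw [← lintegral_const_mul _ hm]
  refine setLIntegral_mono' measurableSet_ball fun z hz => ?_
  rw [← ENNReal.ofReal_mul (by positivity), ← ofReal_norm]
  apply ENNReal.ofReal_le_ofReal
  have hz1 : ‖z‖ ≤ 1 := by simpa using (Metric.mem_ball.1 hz).le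
  have hd : ‖(x + s • z) - x‖ ≤ jap x / 2 := by
    rw [add_sub_cancel_left, norm_smul, Real.norm_of_nonneg hs.le]
    exact (mul_le_of_le_one_right hs.le hz1).trans hsx
  have := mul_le_mul_of_nonneg_right (jap_rpow_le a hd) (norm_nonneg (f (x + s • z)))
  linarith

/-- **Weighted Sobolev embedding into weighted C⁰ (equation (3.1)).** -/
theorem weighted_sobolev_embedding (n : ℕ) (hn : 1 ≤ n) (p δ : ℝ) (hp : (n : ℝ) < p) :
    ∃ C > (0 : ℝ),
      ∀ w : Euc n → ℝ, ContDiff ℝ 1 w → SobW 1 p δ w < ⊤ →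
        ∀ x, |w x| ≤ C * jap x ^ δ * (SobW 1 p δ w).toReal := by
  have hn1 : (1 : ℝ) ≤ n := by exact_mod_cast hn
  have hp1 : 1 < p := by linarith
  have hp0 : 0 < p := by linarith
  set V := volume (Metric.ball (0 : Euc n) 1) with hV
  have hV0 : V ≠ 0 := (Metric.measure_ball_pos volume _ one_pos).ne'
  have hVt : V ≠ ⊤ := measure_ball_lt_top.ne
  set b := (n : ℝ) / p with hb
  have hb1 : b < 1 := (div_lt_one hp0).2 hp
  set a := -δ - b with ha
  -- The hypothesis `n < p` makes the singularity at `t = 0` integrable.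
  set I := ∫⁻ t in Set.Ioc (0 : ℝ) 1, ENNReal.ofReal (t ^ (-b)) with hI
  have hIt : I ≠ ⊤ := by
    have h := (intervalIntegral.intervalIntegrable_rpow' (a := 0) (b := 1) (r := -b)
      (by linarith)).1
    exact (h.lintegral_lt_top).ne
  set A := ENNReal.ofReal (2 ^ |a| * 2 ^ b) with hA
  set B := ENNReal.ofReal (2 ^ |a + 1| * 2 ^ b / 2) * I with hB
  set K := V ^ (1 - 1 / p) * (A + B) with hK
  have hKt : K ≠ ⊤ := ENNReal.mul_ne_top
    (ENNReal.rpow_ne_top_of_nonneg (by rw [sub_nonneg, div_le_one hp0]; exact hp1.le) hVt)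
    (ENNReal.add_ne_top.2 ⟨ENNReal.ofReal_ne_top, ENNReal.mul_ne_top ENNReal.ofReal_ne_top hIt⟩)
  refine ⟨(K / V).toReal + 1, by positivity, fun w hw hfin x => ?_⟩
  have hx := jap_pos x
  set R := jap x / 2 with hR
  have hR0 : 0 < R := by positivity
  set S₀ := (∫⁻ y, ENNReal.ofReal ((jap y ^ a * ‖w y‖) ^ p)) ^ (1 / p) with hS₀
  set S₁ := (∫⁻ y, ENNReal.ofReal ((jap y ^ (a + 1) * ‖fderiv ℝ w y‖) ^ p)) ^ (1 / p) with hS₁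
  have hS : SobW 1 p δ w = S₀ + S₁ := by
    simp [SobW, Finset.sum_range_succ, hS₀, hS₁, ha, hb, norm_iteratedFDeriv_one]
  have hDw : Continuous (fderiv ℝ w) := hw.continuous_fderiv one_ne_zero
  have hRb : R ^ (-b) = 2 ^ b * jap x ^ (-b) := by
    rw [hR, Real.div_rpow hx.le (by norm_num), Real.rpow_neg (by norm_num : (0:ℝ) ≤ 2)]
    field_simp
  have h₀ : ∫⁻ z in Metric.ball (0 : Euc n) 1, ‖w (x + R • z)‖ₑ ≤
      ENNReal.ofReal (jap x ^ δ) * V ^ (1 - 1 / p) * A * S₀ := by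
    refine (lintegral_ball_dilate_weighted_le hp1 a hw.continuous x hR0 le_rfl).trans_eq ?_
    rw [← hV, ← hb, ← hS₀]
    have : ENNReal.ofReal (2 ^ |a| * jap x ^ (-a)) * ENNReal.ofReal (R ^ (-b))
        = ENNReal.ofReal (jap x ^ δ) * A := by
      rw [hA, ← ENNReal.ofReal_mul (by positivity), ← ENNReal.ofReal_mul (by positivity), hRb]
      have e : jap x ^ δ = jap x ^ (-a) * jap x ^ (-b) := by
        rw [← Real.rpow_add hx]; congr 1; rw [ha]; ring
      rw [e]; congr 1; ring
    exact (by ring : _ = V ^ (1 - 1 / p) * S₀ * _).trans ((congrArg _ this).trans (by ring))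
  have h₁ : ∫⁻ t in Set.Ioc (0 : ℝ) 1, ∫⁻ z in Metric.ball (0 : Euc n) 1,
      ENNReal.ofReal R * ‖fderiv ℝ w (x + (t * R) • z)‖ₑ ≤
      ENNReal.ofReal (jap x ^ δ) * V ^ (1 - 1 / p) * B * S₁ := by
    have hc : ENNReal.ofReal (jap x ^ δ) * V ^ (1 - 1 / p) * B * S₁ =
        ∫⁻ t in Set.Ioc (0 : ℝ) 1, (ENNReal.ofReal (jap x ^ δ) * V ^ (1 - 1 / p) *
          ENNReal.ofReal (2 ^ |a + 1| * 2 ^ b / 2) * S₁) * ENNReal.ofReal (t ^ (-b)) := by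
      rw [lintegral_const_mul _ (by fun_prop), ← hI, hB]; ring
    rw [hc]
    refine setLIntegral_mono' measurableSet_Ioc fun t ht => ?_
    have hc' : Continuous fun z : Euc n => fderiv ℝ w (x + (t * R) • z) :=
      hDw.comp (by fun_prop)
    rw [lintegral_const_mul _ hc'.enorm.measurable]
    have := lintegral_ball_dilate_weighted_le hp1 (a + 1) hDw x (mul_pos ht.1 hR0)
      (mul_le_of_le_one_left hR0.le ht.2)
    refine (mul_le_mul_right this _).trans_eq ?_
    rw [← hV, ← hb, ← hS₁]
    have : ENNReal.ofReal R * ENNReal.ofReal (2 ^ |a + 1| * jap x ^ (-(a + 1)))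
          * ENNReal.ofReal ((t * R) ^ (-b))
        = ENNReal.ofReal (jap x ^ δ) * ENNReal.ofReal (2 ^ |a + 1| * 2 ^ b / 2)
          * ENNReal.ofReal (t ^ (-b)) := by
      have ht0 := ht.1
      rw [← ENNReal.ofReal_mul (by positivity), ← ENNReal.ofReal_mul (by positivity),
        ← ENNReal.ofReal_mul (by positivity), ← ENNReal.ofReal_mul (by positivity),
        Real.mul_rpow ht0.le hR0.le, hRb]
      have e : jap x ^ δ = jap x * jap x ^ (-(a + 1)) * jap x ^ (-b) := by
        nth_rewrite 2 [← Real.rpow_one (jap x)]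
        rw [← Real.rpow_add hx, ← Real.rpow_add hx]; congr 1; rw [ha]; ring
      rw [e, hR]; congr 1; ring
    exact (by ring : _ = V ^ (1 - 1 / p) * S₁ * _).trans ((congrArg _ this).trans (by ring))
  have hmain : V * ‖w x‖ₑ ≤ ENNReal.ofReal (jap x ^ δ) * K * (S₀ + S₁) := by
    calc V * ‖w x‖ₑ = ∫⁻ z in Metric.ball (0 : Euc n) 1, ‖w x‖ₑ := by
          rw [lintegral_const, Measure.restrict_apply MeasurableSet.univ, Set.univ_inter, mul_comm]
      _ ≤ ∫⁻ z in Metric.ball (0 : Euc n) 1, (‖w (x + R • z)‖ₑ +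
            ∫⁻ t in Set.Ioc (0 : ℝ) 1,
              ENNReal.ofReal R * ‖fderiv ℝ w (x + (t * R) • z)‖ₑ) :=
          setLIntegral_mono' measurableSet_ball fun z hz =>
            enorm_le_add_lintegral_segment hw x hR0 (by simpa using (Metric.mem_ball.1 hz).le)
      _ = (∫⁻ z in Metric.ball (0 : Euc n) 1, ‖w (x + R • z)‖ₑ) +
            ∫⁻ t in Set.Ioc (0 : ℝ) 1, ∫⁻ z in Metric.ball (0 : Euc n) 1,
              ENNReal.ofReal R * ‖fderiv ℝ w (x + (t * R) • z)‖ₑ := by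
          have hc' : Continuous fun z : Euc n => w (x + R • z) :=
            hw.continuous.comp (by fun_prop)
          rw [lintegral_add_left hc'.enorm.measurable,
            lintegral_lintegral_swap]
          have hc : Continuous fun q : Euc n × ℝ => fderiv ℝ w (x + (q.2 * R) • q.1) :=
            hDw.comp (by fun_prop)
          exact (hc.enorm.measurable.const_mul _).aemeasurable
      _ ≤ ENNReal.ofReal (jap x ^ δ) * V ^ (1 - 1 / p) * A * S₀ +
            ENNReal.ofReal (jap x ^ δ) * V ^ (1 - 1 / p) * B * S₁ := add_le_add h₀ h₁
      _ ≤ ENNReal.ofReal (jap x ^ δ) * V ^ (1 - 1 / p) * (A + B) * S₀ +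
            ENNReal.ofReal (jap x ^ δ) * V ^ (1 - 1 / p) * (A + B) * S₁ := by
          gcongr
          · exact le_self_add
          · exact le_add_self
      _ = _ := by rw [hK]; ring
  rw [← hS] at hmain
  have hdiv : ‖w x‖ₑ ≤ K / V * (ENNReal.ofReal (jap x ^ δ) * SobW 1 p δ w) := by
    rw [mul_comm V, ← ENNReal.le_div_iff_mul_le (Or.inl hV0) (Or.inl hVt)] at hmain
    refine hmain.trans_eq ?_
    simp only [div_eq_mul_inv]; ring
  have hreal := ENNReal.toReal_mono (ENNReal.mul_ne_top (ENNReal.div_ne_top hKt hV0)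
    (ENNReal.mul_ne_top ENNReal.ofReal_ne_top hfin.ne)) hdiv
  rw [toReal_enorm, Real.norm_eq_abs, ENNReal.toReal_mul, ENNReal.toReal_mul,
    ENNReal.toReal_ofReal (by positivity)] at hreal
  have hnn : 0 ≤ jap x ^ δ * (SobW 1 p δ w).toReal := by positivity
  linarith
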